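/- Let g be a hyperbolic isometry of a tree T, and suppose a fundamental domain for g on its axis is a concatenation of non-overlapping coherently oriented segments α₁, …, α_k. For any oriented segment γ, letting c_γ(αᵢ) be the maximal number of non-overlapping positively oriented copies of γ in αᵢ, and c_γ(g) the analogous count in the quotient circle T_g/⟨g⟩, one has Σᵢ c_γ(αᵢ) ≤ c_γ(g) ≤ k + Σᵢ c_γ(αᵢ). -/

import Mathlib

variable {V : Type*}

/-- A group `G` acts on the simplicial tree `T` by graph automorphisms, without
inversions. -/
def IsTreeAction (T : SimpleGraph V) (G : Type*) [Group G] [MulAction G V] : Prop :=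
  T.IsTree ∧ (∀ (g : G) (u v : V), T.Adj u v → T.Adj (g • u) (g • v)) ∧
    (∀ (g : G) (u v : V), T.Adj u v → ¬(g • u = v ∧ g • v = u))

/-- `w` lies on the geodesic segment from `u` to `v`. -/
def OnSeg (T : SimpleGraph V) (u w v : V) : Prop :=
  T.dist u w + T.dist w v = T.dist u v

/-- `g` is elliptic: it fixes a vertex of `T`. -/
def Elliptic (T : SimpleGraph V) {G : Type*} [Group G] [MulAction G V] (g : G) : Prop :=
  ∃ v : V, g • v = v

/-- The translation length of `g`: the minimal displacement of a vertex. -/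
noncomputable def transLen (T : SimpleGraph V) {G : Type*} [Group G] [MulAction G V]
    (g : G) : ℕ :=
  sInf {n : ℕ | ∃ v : V, T.dist v (g • v) = n}

/-- The characteristic subtree (the axis, for hyperbolic `g`): the set of vertices of
minimal displacement. -/
def Axis (T : SimpleGraph V) {G : Type*} [Group G] [MulAction G V] (g : G) : Set V :=
  {v : V | T.dist v (g • v) = transLen T g}

/-- For `p, q` on the axis of a hyperbolic `g`: `q` lies (weakly) in the positive
`g`-direction from `p`. -/
def Ahead (T : SimpleGraph V) {G : Type*} [Group G] [MulAction G V] (g : G)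
    (p q : V) : Prop :=
  T.dist p (g • q) = T.dist p q + transLen T g

/-- There are `n` non-overlapping positively oriented copies of the oriented segment `γ`
(given by its endpoints) inside the oriented segment from `u` to `w`: copies are
`G`-translates, they lie on `[u,w]` in order, successive copies meeting in at most one
point. -/
def SegCopies (T : SimpleGraph V) (G : Type*) [Group G] [MulAction G V]
    (γ : V × V) (u w : V) (n : ℕ) : Prop :=
  ∃ p q : Fin n → V,
    (∀ i, (∃ s : G, s • γ.1 = p i ∧ s • γ.2 = q i) ∧
      OnSeg T u (p i) (q i) ∧ OnSeg T u (q i) w) ∧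
    (∀ i j : Fin n, i < j → OnSeg T u (q i) (p j))

/-- `c_γ(α)`: the maximal number of non-overlapping positively oriented copies of `γ` in
the segment from `u` to `w`. -/
noncomputable def cSeg (T : SimpleGraph V) (G : Type*) [Group G] [MulAction G V]
    (γ : V × V) (u w : V) : ℕ :=
  sSup {n : ℕ | SegCopies T G γ u w n}

/-- There are `n` non-overlapping positively oriented copies of `γ` in the quotient
circle `T_g/⟨g⟩`: `n` copies lying on the axis of `g`, coherently oriented with the axis,
pairwise non-overlapping in cyclic order, and all fitting within one period of `g`. -/
def CircCopies (T : SimpleGraph V) {G : Type*} [Group G] [MulAction G V]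
    (g : G) (γ : V × V) (n : ℕ) : Prop :=
  ∃ p q : Fin n → V,
    (∀ i, p i ∈ Axis T g ∧ q i ∈ Axis T g ∧
      (∃ s : G, s • γ.1 = p i ∧ s • γ.2 = q i) ∧ Ahead T g (p i) (q i)) ∧
    (∀ i j : Fin n, i < j → Ahead T g (q i) (p j)) ∧
    (∀ i j : Fin n, Ahead T g (q i) (g • p j))

/-- `c_γ(g)`: the maximal number of non-overlapping positively oriented copies of `γ` in
`T_g/⟨g⟩` (for hyperbolic `g`). -/
noncomputable def cCirc (T : SimpleGraph V) {G : Type*} [Group G] [MulAction G V]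
    (g : G) (γ : V × V) : ℕ :=
  sSup {n : ℕ | CircCopies T g γ n}

/-! The signed distance from a base point embeds the axis of `g` into `ℤ`, with `g` acting as the
translation by `transLen T g`, so that copies of `γ` become intervals of length `d(γ.1, γ.2)` whose
left endpoints lie in a fixed periodic set. Copies in consecutive segments do not overlap, and
cutting a segment at a point destroys at most the one copy that straddles the cut. The count on the
circle is the maximum, over the points `u` of the axis, of the count on `[u, g • u]`, so opening the
circle at `p 0` also loses at most one copy. Hence the `k` cut points `p 0, …, p (k - 1)` of the
circle cost at most `k` copies. -/

section Tree

variable {T : SimpleGraph V}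

theorem exists_adj_dist_eq_dist_add_one (hT : T.Connected) {x z : V} (h : x ≠ z) :
    ∃ y, T.Adj x y ∧ T.dist x z = T.dist y z + 1 := by
  obtain ⟨p, hp⟩ := hT.exists_walk_length_eq_dist x z
  cases p with
  | nil => exact absurd rfl h
  | @cons _ y _ hxy q =>
    refine ⟨y, hxy, le_antisymm ?_ ?_⟩
    · have htri := hT.dist_triangle (u := x) (v := y) (w := z)
      rw [SimpleGraph.dist_eq_one_iff_adj.2 hxy] at htri
      omega
    · rw [← hp, SimpleGraph.Walk.length_cons]
      exact Nat.succ_le_succ (SimpleGraph.dist_le q)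

theorem length_eq_dist_of_isPath (hT : T.IsTree) {x z : V} {p : T.Walk x z} (hp : p.IsPath) :
    p.length = T.dist x z := by
  obtain ⟨q, hq, hlen⟩ := hT.connected.exists_path_of_dist x z
  rw [(hT.existsUnique_path x z).unique hp hq, hlen]

theorem dist_eq_of_adj_of_dist_succ (hT : T.IsTree) {x w w' z : V} (h : T.Adj w w')
    (hx : T.dist x w' = T.dist x w + 1) (hz : T.dist w z = T.dist w' z + 1) :
    T.dist x z = T.dist x w + 1 + T.dist w' z := by
  obtain ⟨p, hp⟩ := hT.connected.exists_walk_length_eq_dist x w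
  obtain ⟨q, hq⟩ := hT.connected.exists_walk_length_eq_dist w' z
  have hpw' : (p.concat h).IsPath := SimpleGraph.Walk.isPath_of_length_eq_dist _ <| by
    rw [SimpleGraph.Walk.length_concat, hp, hx]
  have hwq : (SimpleGraph.Walk.cons h q).IsPath :=
    SimpleGraph.Walk.isPath_of_length_eq_dist _ <| by
      rw [SimpleGraph.Walk.length_cons, hq, hz]
  -- In a tree a walk is a path as soon as it never backtracks, and this is a local condition.
  have hpath : (p.append (.cons h q)).IsPath := by
    rw [hT.isAcyclic.isPath_iff_isChain] at hpw' hwq ⊢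
    rw [SimpleGraph.Walk.edges_concat, List.concat_eq_append] at hpw'
    rw [SimpleGraph.Walk.edges_append, SimpleGraph.Walk.edges_cons, List.isChain_split]
    exact ⟨hpw', hwq⟩
  rw [← length_eq_dist_of_isPath hT hpath, SimpleGraph.Walk.length_append,
    SimpleGraph.Walk.length_cons, hp, hq]
  omega

theorem dist_add_dist_le_max (hT : T.IsTree) (x y z w : V) :
    T.dist x y + T.dist z w ≤ max (T.dist x z + T.dist y w) (T.dist x w + T.dist y z) := by
  obtain ⟨n, hn⟩ : ∃ n, T.dist w z = n := ⟨_, rfl⟩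
  induction n generalizing w with
  | zero =>
    obtain rfl : w = z := hT.connected.dist_eq_zero_iff.1 hn
    have htri := hT.connected.dist_triangle (u := x) (v := w) (w := y)
    simpa [T.dist_comm (u := y)] using htri
  | succ n ih =>
    have hne : w ≠ z := by rintro rfl; simp at hn
    obtain ⟨w', hadj, hw'⟩ := exists_adj_dist_eq_dist_add_one hT.connected hne
    have hxwy := hT.connected.dist_triangle (u := x) (v := w) (w := y)
    have hcomm := T.dist_comm (u := w) (v := y)
    have hcommz := T.dist_comm (u := w) (v := z)
    have hcommz' := T.dist_comm (u := w') (v := z)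
    rcases hT.dist_eq_dist_add_one_of_adj x hadj with hx | hx
    · rcases hT.dist_eq_dist_add_one_of_adj y hadj with hy | hy
      · have := ih w' (by omega)
        omega
      · have := dist_eq_of_adj_of_dist_succ hT hadj hy hw'
        omega
    · have := dist_eq_of_adj_of_dist_succ hT hadj hx hw'
      omega

theorem OnSeg.glue (hT : T.IsTree) {x y z w : V} (hxyz : OnSeg T x y z) (hyzw : OnSeg T y z w)
    (hyz : y ≠ z) : OnSeg T x y w := by
  have hpos := hT.connected.pos_dist_of_ne hyz
  have hfour := dist_add_dist_le_max hT x z y w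
  have htri := hT.connected.dist_triangle (u := x) (v := y) (w := w)
  have hcomm := T.dist_comm (u := z) (v := y)
  unfold OnSeg at *
  omega

end Tree

section Action

variable {T : SimpleGraph V} {G : Type*} [Group G] [MulAction G V]

theorem IsTreeAction.dist_smul_smul (hT : IsTreeAction T G) (s : G) (x y : V) :
    T.dist (s • x) (s • y) = T.dist x y := by
  have hle (s : G) (x y : V) : T.dist (s • x) (s • y) ≤ T.dist x y := by
    obtain ⟨p, hp⟩ := hT.1.connected.exists_walk_length_eq_dist x y
    let φ : T →g T := ⟨(s • ·), fun {a b} => hT.2.1 s a b⟩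
    calc T.dist (s • x) (s • y) ≤ (p.map φ).length := SimpleGraph.dist_le _
      _ = T.dist x y := by rw [SimpleGraph.Walk.length_map, hp]
  exact le_antisymm (hle s x y) (by simpa using hle s⁻¹ (s • x) (s • y))

theorem transLen_le_dist_smul (g : G) (x : V) : transLen T g ≤ T.dist x (g • x) :=
  Nat.sInf_le ⟨x, rfl⟩

theorem IsTreeAction.transLen_pos (hT : IsTreeAction T G) {g : G} (hg : ¬ Elliptic T g) :
    0 < transLen T g := by
  have := hT.1.connected.nonempty
  obtain ⟨x, hx⟩ : ∃ x, T.dist x (g • x) = transLen T g :=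
    Nat.sInf_mem (Set.range_nonempty fun x : V => T.dist x (g • x))
  rw [← hx]
  exact hT.1.connected.pos_dist_of_ne fun h => hg ⟨x, h.symm⟩

theorem IsTreeAction.smul_mem_axis_iff (hT : IsTreeAction T G) {g : G} {x : V} :
    g • x ∈ Axis T g ↔ x ∈ Axis T g := by
  simp only [Axis, Set.mem_ofPred_eq, hT.dist_smul_smul]

theorem IsTreeAction.ahead_smul_smul_iff (hT : IsTreeAction T G) {g : G} {x y : V} :
    Ahead T g (g • x) (g • y) ↔ Ahead T g x y := by
  simp only [Ahead, hT.dist_smul_smul]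

theorem Ahead.refl {g : G} {x : V} (hx : x ∈ Axis T g) : Ahead T g x x := by
  have hx' : T.dist x (g • x) = transLen T g := hx
  simp [Ahead, hx']

theorem dist_smul_eq_transLen_add_one (hT : IsTreeAction T G) {g : G} {x y : V}
    (hx : x ∈ Axis T g) (hxy : T.Adj x y) (hy : T.dist x (g • x) = T.dist y (g • x) + 1) :
    T.dist x (g • y) = transLen T g + 1 := by
  have hx' : T.dist x (g • x) = transLen T g := hx
  -- If `g • y` were closer to `x` than `g • x`, minimality would force `transLen T g = 1`, and `g`
  -- would invert the edge `xy`.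
  rcases hT.1.dist_eq_dist_add_one_of_adj x (hT.2.1 g x y hxy) with hback | hforward
  swap
  · rw [hforward, hx']
  have hmin := transLen_le_dist_smul (T := T) g y
  have hone : T.dist x y = 1 := SimpleGraph.dist_eq_one_iff_adj.2 hxy
  have hfour := dist_add_dist_le_max hT.1 x (g • x) y (g • y)
  have hsmul := hT.dist_smul_smul g x y
  have hcomm := T.dist_comm (u := g • x) (v := y)
  have hgx : y = g • x := hT.1.connected.dist_eq_zero_iff.1 (by omega)
  have hgy : x = g • y := hT.1.connected.dist_eq_zero_iff.1 (by omega)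
  exact absurd ⟨hgx.symm, hgy.symm⟩ (hT.2.2 g x y hxy)

theorem ahead_smul (hT : IsTreeAction T G) {g : G} (hg : ¬ Elliptic T g) {x : V}
    (hx : x ∈ Axis T g) : Ahead T g x (g • x) := by
  obtain ⟨y, hxy, hy⟩ :=
    exists_adj_dist_eq_dist_add_one hT.1.connected fun h : x = g • x => hg ⟨x, h.symm⟩
  have hx' : T.dist x (g • x) = transLen T g := hx
  have hforward := dist_smul_eq_transLen_add_one hT hx hxy hy
  have hglue := dist_eq_of_adj_of_dist_succ hT.1 (z := g • g • x) (hT.2.1 g x y hxy)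
    (by rw [hforward, hx']) (by rw [hT.dist_smul_smul, hT.dist_smul_smul, hy])
  rw [hT.dist_smul_smul] at hglue
  unfold Ahead
  omega

theorem ahead_total (hT : IsTreeAction T G) {g : G} (hg : ¬ Elliptic T g) (x : V) {y : V}
    (hy : y ∈ Axis T g) : Ahead T g x y ∨ Ahead T g y x := by
  have hy' : T.dist y (g • y) = transLen T g := hy
  have htwo : T.dist y (g • g • y) = T.dist y (g • y) + transLen T g := ahead_smul hT hg hy
  have hfour := dist_add_dist_le_max hT.1 (g • x) (g • y) y (g • g • y)
  have hupper := hT.1.connected.dist_triangle (u := x) (v := y) (w := g • y)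
  have hupper' := hT.1.connected.dist_triangle (u := g • x) (v := g • y) (w := y)
  rw [T.dist_comm (u := g • y) (v := y), T.dist_comm (u := g • x) (v := y)] at hfour hupper'
  simp only [hT.dist_smul_smul] at hfour hupper'
  unfold Ahead
  rw [T.dist_comm (u := y) (v := x)]
  omega

theorem Ahead.onSeg_smul (hT : IsTreeAction T G) {g : G} (hg : ¬ Elliptic T g) {x y z : V}
    (hy : y ∈ Axis T g) (hxy : Ahead T g x y) (hyz : Ahead T g y z) :
    OnSeg T x y (g • z) := by
  have hy' : T.dist y (g • y) = transLen T g := hy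
  refine OnSeg.glue hT.1 (z := g • y) ?_ ?_ fun h => hg ⟨y, h.symm⟩
  · rw [OnSeg, hy', hxy]
  · rw [OnSeg, hy', hT.dist_smul_smul, hyz, add_comm]

theorem Ahead.onSeg (hT : IsTreeAction T G) {g : G} (hg : ¬ Elliptic T g) {x y z : V}
    (hy : y ∈ Axis T g) (hz : z ∈ Axis T g) (hxy : Ahead T g x y) (hyz : Ahead T g y z) :
    OnSeg T x y z := by
  have hz' : T.dist z (g • z) = transLen T g := hz
  have hseg := hxy.onSeg_smul hT hg hy hyz
  have htri := hT.1.connected.dist_triangle (u := x) (v := y) (w := z)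
  have htri' := hT.1.connected.dist_triangle (u := x) (v := z) (w := g • z)
  unfold OnSeg Ahead at *
  omega

theorem Ahead.trans (hT : IsTreeAction T G) {g : G} (hg : ¬ Elliptic T g) {x y z : V}
    (hy : y ∈ Axis T g) (hz : z ∈ Axis T g) (hxy : Ahead T g x y) (hyz : Ahead T g y z) :
    Ahead T g x z := by
  have hseg := hxy.onSeg hT hg hy hz hyz
  have hseg' := hxy.onSeg_smul hT hg hy hyz
  unfold OnSeg Ahead at *
  omega

theorem OnSeg.mem_axis (hT : IsTreeAction T G) {g : G} {u x w : V} (hu : u ∈ Axis T g)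
    (hw : w ∈ Axis T g) (huw : Ahead T g u w) (hx : OnSeg T u x w) : x ∈ Axis T g := by
  have hu' : T.dist u (g • u) = transLen T g := hu
  have hw' : T.dist w (g • w) = transLen T g := hw
  have hmin := transLen_le_dist_smul (T := T) g x
  have hfour := dist_add_dist_le_max hT.1 x (g • x) u (g • w)
  have hugx := hT.1.connected.dist_triangle (u := u) (v := g • u) (w := g • x)
  have hxgw := hT.1.connected.dist_triangle (u := x) (v := w) (w := g • w)
  simp only [hT.dist_smul_smul, T.dist_comm (u := x) (v := u),
    T.dist_comm (u := g • x) (v := u)] at hfour hugx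
  unfold OnSeg Ahead at *
  change T.dist x (g • x) = transLen T g
  omega

theorem onSeg_iff_ahead (hT : IsTreeAction T G) {g : G} (hg : ¬ Elliptic T g) {u x w : V}
    (hu : u ∈ Axis T g) (hw : w ∈ Axis T g) (huw : Ahead T g u w) :
    OnSeg T u x w ↔ x ∈ Axis T g ∧ Ahead T g u x ∧ Ahead T g x w := by
  refine ⟨fun hx => ?_, fun ⟨hx, hux, hxw⟩ => hux.onSeg hT hg hx hw hxw⟩
  have hxa : x ∈ Axis T g := hx.mem_axis hT hu hw huw
  have hx' : T.dist x (g • x) = transLen T g := hxa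
  have hw' : T.dist w (g • w) = transLen T g := hw
  have hugx := hT.1.connected.dist_triangle (u := u) (v := g • x) (w := g • w)
  have hugx' := hT.1.connected.dist_triangle (u := u) (v := x) (w := g • x)
  have hxgw := hT.1.connected.dist_triangle (u := u) (v := x) (w := g • w)
  have hxgw' := hT.1.connected.dist_triangle (u := x) (v := w) (w := g • w)
  rw [hT.dist_smul_smul] at hugx
  unfold OnSeg Ahead at *
  exact ⟨hxa, by omega, by omega⟩

end Action

section AxisCoord

variable {T : SimpleGraph V} {G : Type*} [Group G] [MulAction G V] {g : G} {a x y : V}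

open Classical in
/-- The signed distance from the base point `a`, positive in the direction of translation. It
identifies the axis of a hyperbolic `g` with a subset of `ℤ` on which `g` acts as a translation. -/
noncomputable def axisCoord (T : SimpleGraph V) (g : G) (a x : V) : ℤ :=
  if Ahead T g a x then T.dist a x else -T.dist a x

theorem Ahead.axisCoord_eq (hT : IsTreeAction T G) (hg : ¬ Elliptic T g) (ha : a ∈ Axis T g)
    (hx : x ∈ Axis T g) (hy : y ∈ Axis T g) (hxy : Ahead T g x y) :
    axisCoord T g a y = axisCoord T g a x + T.dist x y := by
  by_cases hax : Ahead T g a x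
  · have hseg : T.dist a x + T.dist x y = T.dist a y := hax.onSeg hT hg hx hy hxy
    simp only [axisCoord, hax, hax.trans hT hg hx hy hxy, if_true]
    omega
  · have hxa := (ahead_total hT hg a hx).resolve_left hax
    by_cases hay : Ahead T g a y
    · have hseg : T.dist x a + T.dist a y = T.dist x y := hxa.onSeg hT hg ha hy hay
      simp only [axisCoord, hax, hay, if_true, if_false, T.dist_comm (u := a) (v := x)]
      omega
    · have hya := (ahead_total hT hg a hy).resolve_left hay
      have hseg : T.dist x y + T.dist y a = T.dist x a := hxy.onSeg hT hg hy ha hya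
      simp only [axisCoord, hax, hay, if_false, T.dist_comm (u := a)]
      omega

theorem axisCoord_le_iff (hT : IsTreeAction T G) (hg : ¬ Elliptic T g) (ha : a ∈ Axis T g)
    (hx : x ∈ Axis T g) (hy : y ∈ Axis T g) :
    axisCoord T g a x ≤ axisCoord T g a y ↔ Ahead T g x y := by
  refine ⟨fun hle => ?_, fun h => ?_⟩
  · refine (ahead_total hT hg x hy).elim id fun hyx => ?_
    have hcoord := hyx.axisCoord_eq hT hg ha hy hx
    obtain rfl : y = x := hT.1.connected.dist_eq_zero_iff.1 (by omega)
    exact hyx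
  · have hcoord := h.axisCoord_eq hT hg ha hx hy
    omega

theorem axisCoord_smul (hT : IsTreeAction T G) (hg : ¬ Elliptic T g) (ha : a ∈ Axis T g)
    (hx : x ∈ Axis T g) : axisCoord T g a (g • x) = axisCoord T g a x + transLen T g := by
  have hx' : T.dist x (g • x) = transLen T g := hx
  rw [(ahead_smul hT hg hx).axisCoord_eq hT hg ha hx (hT.smul_mem_axis_iff.2 hx), hx']

end AxisCoord

section Packing

/-- `F` is the set of left endpoints of non-overlapping intervals `[a, a + L] ⊆ [u, w]` with
`a ∈ S`. -/
structure IsPacking (S : Set ℤ) (L u w : ℤ) (F : Finset ℤ) : Prop where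
  mem : ∀ a ∈ F, a ∈ S
  left_le : ∀ a ∈ F, u ≤ a
  add_le_right : ∀ a ∈ F, a + L ≤ w
  add_le_of_lt : ∀ a ∈ F, ∀ b ∈ F, a < b → a + L ≤ b

/-- The maximal number of non-overlapping intervals `[a, a + L] ⊆ [u, w]` with `a ∈ S`: the
counterpart on the line of the counts `cSeg` and `cCirc`. -/
noncomputable def packNum (S : Set ℤ) (L u w : ℤ) : ℕ :=
  sSup {n | ∃ F, IsPacking S L u w F ∧ F.card = n}

variable {S : Set ℤ} {L u v w : ℤ} {F : Finset ℤ}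

theorem IsPacking.of_subset (hF : IsPacking S L u w F) {u' w' : ℤ} {F' : Finset ℤ} (hsub : F' ⊆ F)
    (hleft : ∀ a ∈ F', u' ≤ a) (hright : ∀ a ∈ F', a + L ≤ w') : IsPacking S L u' w' F' :=
  ⟨fun a ha => hF.mem a (hsub ha), hleft, hright,
    fun a ha b hb => hF.add_le_of_lt a (hsub ha) b (hsub hb)⟩

theorem bddAbove_isPacking_card (S : Set ℤ) (L u w : ℤ) :
    BddAbove {n | ∃ F, IsPacking S L u w F ∧ F.card = n} := by
  refine ⟨(Finset.Icc u (w - L)).card, ?_⟩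
  rintro _ ⟨F, hF, rfl⟩
  refine Finset.card_le_card fun a ha => Finset.mem_Icc.2 ⟨hF.left_le a ha, ?_⟩
  have := hF.add_le_right a ha
  omega

theorem IsPacking.card_le_packNum (hF : IsPacking S L u w F) : F.card ≤ packNum S L u w :=
  le_csSup (bddAbove_isPacking_card S L u w) ⟨F, hF, rfl⟩

theorem exists_isPacking_card_eq_packNum (S : Set ℤ) (L u w : ℤ) :
    ∃ F, IsPacking S L u w F ∧ F.card = packNum S L u w := by
  have hempty : IsPacking S L u w ∅ := ⟨by simp, by simp, by simp, by simp⟩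
  have hnonempty : {n | ∃ F, IsPacking S L u w F ∧ F.card = n}.Nonempty := ⟨0, ∅, hempty, rfl⟩
  exact Nat.sSup_mem hnonempty (bddAbove_isPacking_card S L u w)

theorem exists_isPacking_card_eq_iff (hL : 0 < L) {n : ℕ} :
    (∃ F, IsPacking S L u w F ∧ F.card = n) ↔
      ∃ m : Fin n → ℤ, (∀ i, m i ∈ S ∧ u ≤ m i ∧ m i + L ≤ w) ∧
        ∀ i j, i < j → m i + L ≤ m j := by
  constructor
  · rintro ⟨F, hF, hcard⟩
    have hmem := F.orderEmbOfFin_mem hcard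
    refine ⟨F.orderEmbOfFin hcard, fun i => ⟨hF.mem _ (hmem i), hF.left_le _ (hmem i),
      hF.add_le_right _ (hmem i)⟩, fun i j hij => ?_⟩
    exact hF.add_le_of_lt _ (hmem i) _ (hmem j) ((F.orderEmbOfFin hcard).strictMono hij)
  · rintro ⟨m, hm, hsep⟩
    have hmono : StrictMono m := fun i j hij => by have := hsep i j hij; omega
    refine ⟨Finset.univ.map ⟨m, hmono.injective⟩, ⟨?_, ?_, ?_, ?_⟩, by simp⟩
    · simpa using fun i => (hm i).1
    · simpa using fun i => (hm i).2.1
    · simpa using fun i => (hm i).2.2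
    · simpa using fun i j hij => hsep i j (hmono.lt_iff_lt.1 hij)

theorem packNum_add_packNum_le (hL : 0 < L) (huv : u ≤ v) (hvw : v ≤ w) :
    packNum S L u v + packNum S L v w ≤ packNum S L u w := by
  obtain ⟨F, hF, hFcard⟩ := exists_isPacking_card_eq_packNum S L u v
  obtain ⟨F', hF', hF'card⟩ := exists_isPacking_card_eq_packNum S L v w
  have hright := hF.add_le_right
  have hleft := hF'.left_le
  have hdisj : Disjoint F F' := Finset.disjoint_left.2 fun a ha ha' => by
    have := hright a ha
    have := hleft a ha'
    omega
  rw [← hFcard, ← hF'card, ← Finset.card_union_of_disjoint hdisj]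
  refine IsPacking.card_le_packNum ⟨fun a ha => ?_, fun a ha => ?_, fun a ha => ?_,
    fun a ha b hb hab => ?_⟩
  · exact (Finset.mem_union.1 ha).elim (hF.mem a) (hF'.mem a)
  · exact (Finset.mem_union.1 ha).elim (hF.left_le a) fun h => huv.trans (hleft a h)
  · exact (Finset.mem_union.1 ha).elim (fun h => (hright a h).trans hvw) (hF'.add_le_right a)
  · rcases Finset.mem_union.1 ha with ha | ha <;> rcases Finset.mem_union.1 hb with hb | hb
    · exact hF.add_le_of_lt a ha b hb hab
    · exact (hright a ha).trans (hleft b hb)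
    · have := hright b hb
      have := hleft a ha
      omega
    · exact hF'.add_le_of_lt a ha b hb hab

theorem packNum_le_packNum_add_packNum_add_one (S : Set ℤ) (L u v w : ℤ) :
    packNum S L u w ≤ packNum S L u v + packNum S L v w + 1 := by
  obtain ⟨F, hF, hFcard⟩ := exists_isPacking_card_eq_packNum S L u w
  let left := F.filter (· + L ≤ v)
  let right := F.filter (v ≤ ·)
  let straddling := F.filter fun a => a < v ∧ v < a + L
  have hcover : F ⊆ left ∪ right ∪ straddling := fun a ha => by
    simp only [left, right, straddling, Finset.mem_union, Finset.mem_filter, ha, true_and]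
    omega
  have hleft : IsPacking S L u v left := hF.of_subset (Finset.filter_subset _ _)
    (fun a ha => hF.left_le a (Finset.mem_filter.1 ha).1) fun a ha => (Finset.mem_filter.1 ha).2
  have hright : IsPacking S L v w right := hF.of_subset (Finset.filter_subset _ _)
    (fun a ha => (Finset.mem_filter.1 ha).2) fun a ha =>
      hF.add_le_right a (Finset.mem_filter.1 ha).1
  have hstraddling : straddling.card ≤ 1 := Finset.card_le_one.2 fun a ha b hb => by
    obtain ⟨haF, ha⟩ := Finset.mem_filter.1 ha
    obtain ⟨hbF, hb⟩ := Finset.mem_filter.1 hb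
    have hab := hF.add_le_of_lt a haF b hbF
    have hba := hF.add_le_of_lt b hbF a haF
    omega
  calc packNum S L u w = F.card := hFcard.symm
    _ ≤ (left ∪ right ∪ straddling).card := Finset.card_le_card hcover
    _ ≤ left.card + right.card + straddling.card :=
      (Finset.card_union_le _ _).trans (Nat.add_le_add_right (Finset.card_union_le _ _) _)
    _ ≤ packNum S L u v + packNum S L v w + 1 :=
      Nat.add_le_add (Nat.add_le_add hleft.card_le_packNum hright.card_le_packNum) hstraddling

theorem packNum_le_packNum_add (hS : Function.Periodic (· ∈ S) v) :
    packNum S L u w ≤ packNum S L (u + v) (w + v) := by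
  obtain ⟨F, hF, hFcard⟩ := exists_isPacking_card_eq_packNum S L u w
  rw [← hFcard, ← F.card_map (addRightEmbedding v)]
  refine IsPacking.card_le_packNum ⟨?_, ?_, ?_, ?_⟩ <;>
    simp only [Finset.forall_mem_map, addRightEmbedding_apply]
  · exact fun a ha => cast (hS a).symm (hF.mem a ha)
  · exact fun a ha => Int.add_le_add_right (hF.left_le a ha) v
  · intro a ha
    have := hF.add_le_right a ha
    omega
  · intro a ha b hb hab
    have := hF.add_le_of_lt a ha b hb (by omega)
    omega

theorem packNum_add_eq (hS : Function.Periodic (· ∈ S) v) :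
    packNum S L (u + v) (w + v) = packNum S L u w := by
  refine le_antisymm ?_ (packNum_le_packNum_add hS)
  simpa using packNum_le_packNum_add (L := L) (u := u + v) (w := w + v) hS.neg

theorem packNum_period_le {l : ℤ} (hL : 0 < L) (hl : 0 < l) (hS : Function.Periodic (· ∈ S) l)
    (u v : ℤ) : packNum S L u (u + l) ≤ packNum S L v (v + l) + 1 := by
  obtain ⟨u', ⟨hvu', hu'v⟩, n, hn⟩ : ∃ u' ∈ Set.Ico v (v + l), ∃ n : ℤ, u' + n • l = u :=
    ⟨toIcoMod hl v u, toIcoMod_mem_Ico hl v u, toIcoDiv hl v u, toIcoMod_add_toIcoDiv_zsmul hl v u⟩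
  calc packNum S L u (u + l)
      = packNum S L (u' + n • l) (u' + l + n • l) := by rw [add_right_comm u', hn]
    _ = packNum S L u' (u' + l) := packNum_add_eq (hS.zsmul n)
    _ ≤ packNum S L u' (v + l) + packNum S L (v + l) (u' + l) + 1 :=
      packNum_le_packNum_add_packNum_add_one S L u' (v + l) (u' + l)
    _ = packNum S L v u' + packNum S L u' (v + l) + 1 := by
      rw [packNum_add_eq hS, add_comm (packNum S L v u')]
    _ ≤ packNum S L v (v + l) + 1 :=
      Nat.add_le_add_right (packNum_add_packNum_le hL hvu' hu'v.le) 1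

theorem sum_packNum_le (hL : 0 < L) {k : ℕ} {P : Fin (k + 1) → ℤ} (hP : Monotone P) :
    ∑ i : Fin k, packNum S L (P i.castSucc) (P i.succ) ≤ packNum S L (P 0) (P (Fin.last k)) := by
  induction k with
  | zero => simp
  | succ k ih =>
    rw [Fin.sum_univ_castSucc, Fin.succ_last]
    refine le_trans (Nat.add_le_add_right (ih (hP.comp Fin.strictMono_castSucc.monotone)) _) ?_
    exact packNum_add_packNum_le hL (hP (Fin.zero_le _)) (hP (Fin.le_last _))

theorem packNum_add_one_le_add_sum {k : ℕ} (hk : 0 < k) (P : Fin (k + 1) → ℤ) :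
    packNum S L (P 0) (P (Fin.last k)) + 1 ≤
      k + ∑ i : Fin k, packNum S L (P i.castSucc) (P i.succ) := by
  induction k, hk using Nat.le_induction with
  | base => simp [add_comm]
  | succ k _ ih =>
    have hfirst := ih (P ∘ Fin.castSucc)
    have hcut := packNum_le_packNum_add_packNum_add_one S L (P 0) (P (Fin.last k).castSucc)
      (P (Fin.last k).succ)
    rw [Fin.sum_univ_castSucc, ← Fin.succ_last k]
    simp only [Function.comp_apply, Fin.castSucc_zero, Fin.succ_castSucc] at hfirst ⊢
    omega

end Packing

section Copies

variable {T : SimpleGraph V} {G : Type*} [Group G] [MulAction G V] {g : G} {γ : V × V}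
  {a u w : V} {n : ℕ}

/-- The translate of `γ` by `s` is a positively oriented copy of `γ` on the axis of `g`. -/
def IsAxisCopy (T : SimpleGraph V) (g : G) (γ : V × V) (s : G) : Prop :=
  s • γ.1 ∈ Axis T g ∧ s • γ.2 ∈ Axis T g ∧ Ahead T g (s • γ.1) (s • γ.2)

theorem circCopies_iff : CircCopies T g γ n ↔
    ∃ s : Fin n → G, (∀ i, IsAxisCopy T g γ (s i)) ∧
      (∀ i j, i < j → Ahead T g (s i • γ.2) (s j • γ.1)) ∧
      ∀ i j, Ahead T g (s i • γ.2) (g • s j • γ.1) := by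
  constructor
  · rintro ⟨p, q, hcopy, hsep, hperiod⟩
    choose hp hq hs hpq using hcopy
    choose s hs using hs
    obtain rfl : (fun i => s i • γ.1) = p := funext fun i => (hs i).1
    obtain rfl : (fun i => s i • γ.2) = q := funext fun i => (hs i).2
    exact ⟨s, fun i => ⟨hp i, hq i, hpq i⟩, hsep, hperiod⟩
  · rintro ⟨s, hcopy, hsep, hperiod⟩
    exact ⟨fun i => s i • γ.1, fun i => s i • γ.2,
      fun i => ⟨(hcopy i).1, (hcopy i).2.1, ⟨s i, rfl, rfl⟩, (hcopy i).2.2⟩, hsep, hperiod⟩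

theorem segCopies_iff (hT : IsTreeAction T G) (hg : ¬ Elliptic T g) (hu : u ∈ Axis T g)
    (hw : w ∈ Axis T g) (huw : Ahead T g u w) : SegCopies T G γ u w n ↔
    ∃ s : Fin n → G, (∀ i, IsAxisCopy T g γ (s i) ∧ Ahead T g u (s i • γ.1) ∧
      Ahead T g (s i • γ.2) w) ∧ ∀ i j, i < j → Ahead T g (s i • γ.2) (s j • γ.1) := by
  constructor
  · rintro ⟨p, q, hcopy, hsep⟩
    choose hs hpq hqw using hcopy
    choose s hs using hs
    obtain rfl : (fun i => s i • γ.1) = p := funext fun i => (hs i).1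
    obtain rfl : (fun i => s i • γ.2) = q := funext fun i => (hs i).2
    have hend i := (onSeg_iff_ahead hT hg hu hw huw).1 (hqw i)
    have hstart i := (onSeg_iff_ahead hT hg hu (hend i).1 (hend i).2.1).1 (hpq i)
    refine ⟨s, fun i => ⟨⟨(hstart i).1, (hend i).1, (hstart i).2.2⟩, (hstart i).2.1,
      (hend i).2.2⟩, fun i j hij => ?_⟩
    exact ((onSeg_iff_ahead hT hg hu (hstart j).1 (hstart j).2.1).1 (hsep i j hij)).2.2
  · rintro ⟨s, hcopy, hsep⟩
    have hend i : Ahead T g u (s i • γ.2) :=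
      (hcopy i).2.1.trans hT hg (hcopy i).1.1 (hcopy i).1.2.1 (hcopy i).1.2.2
    refine ⟨fun i => s i • γ.1, fun i => s i • γ.2, fun i => ⟨⟨s i, rfl, rfl⟩, ?_, ?_⟩,
      fun i j hij => ?_⟩
    · exact (hcopy i).2.1.onSeg hT hg (hcopy i).1.1 (hcopy i).1.2.1 (hcopy i).1.2.2
    · exact (hend i).onSeg hT hg (hcopy i).1.2.1 hw (hcopy i).2.2
    · exact (hend i).onSeg hT hg (hcopy i).1.2.1 (hcopy j).1.1 (hsep i j hij)

theorem SegCopies.circCopies (hT : IsTreeAction T G) (hg : ¬ Elliptic T g) (hu : u ∈ Axis T g)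
    (h : SegCopies T G γ u (g • u) n) : CircCopies T g γ n := by
  have hgu := hT.smul_mem_axis_iff.2 hu
  obtain ⟨s, hcopy, hsep⟩ := (segCopies_iff hT hg hu hgu (ahead_smul hT hg hu)).1 h
  refine circCopies_iff.2 ⟨s, fun i => (hcopy i).1, hsep, fun i j => ?_⟩
  exact (hcopy i).2.2.trans hT hg hgu (hT.smul_mem_axis_iff.2 (hcopy j).1.1)
    (hT.ahead_smul_smul_iff.2 (hcopy j).2.1)

theorem CircCopies.exists_segCopies (hT : IsTreeAction T G) (hg : ¬ Elliptic T g) (hn : 0 < n)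
    (h : CircCopies T g γ n) : ∃ u ∈ Axis T g, SegCopies T G γ u (g • u) n := by
  obtain ⟨s, hcopy, hsep, hperiod⟩ := circCopies_iff.1 h
  let first : Fin n := ⟨0, hn⟩
  have hu : s first • γ.1 ∈ Axis T g := (hcopy first).1
  refine ⟨s first • γ.1, hu, (segCopies_iff hT hg hu (hT.smul_mem_axis_iff.2 hu)
    (ahead_smul hT hg hu)).2 ⟨s, fun i => ⟨hcopy i, ?_, hperiod i first⟩, hsep⟩⟩
  rcases (show first ≤ i from Nat.zero_le _).eq_or_lt with rfl | hi
  · exact Ahead.refl hu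
  · exact (hcopy first).2.2.trans hT hg (hcopy first).2.1 (hcopy i).1 (hsep first i hi)

/-- The coordinates of the starting points of the copies of `γ` on the axis of `g`. -/
def copyCoords (T : SimpleGraph V) (g : G) (γ : V × V) (a : V) : Set ℤ :=
  {m | ∃ s : G, IsAxisCopy T g γ s ∧ axisCoord T g a (s • γ.1) = m}

theorem IsTreeAction.isAxisCopy_mul_iff (hT : IsTreeAction T G) {s : G} :
    IsAxisCopy T g γ (g * s) ↔ IsAxisCopy T g γ s := by
  simp only [IsAxisCopy, mul_smul, hT.smul_mem_axis_iff, hT.ahead_smul_smul_iff]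

theorem periodic_copyCoords (hT : IsTreeAction T G) (hg : ¬ Elliptic T g) (ha : a ∈ Axis T g) :
    Function.Periodic (· ∈ copyCoords T g γ a) (transLen T g : ℤ) := by
  refine fun m => propext ((Equiv.mulLeft g).surjective.exists.trans (exists_congr fun s => ?_))
  simp only [Equiv.coe_mulLeft, hT.isAxisCopy_mul_iff]
  refine and_congr_right fun hs => ?_
  rw [mul_smul, axisCoord_smul hT hg ha hs.1, add_left_inj]

theorem segCopies_iff_exists_isPacking (hT : IsTreeAction T G) (hg : ¬ Elliptic T g)
    (hγ : γ.1 ≠ γ.2) (ha : a ∈ Axis T g) (hu : u ∈ Axis T g) (hw : w ∈ Axis T g)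
    (huw : Ahead T g u w) : SegCopies T G γ u w n ↔
    ∃ F, IsPacking (copyCoords T g γ a) (T.dist γ.1 γ.2) (axisCoord T g a u) (axisCoord T g a w) F ∧
      F.card = n := by
  have hend {s : G} (hs : IsAxisCopy T g γ s) :
      axisCoord T g a (s • γ.2) = axisCoord T g a (s • γ.1) + T.dist γ.1 γ.2 := by
    rw [hs.2.2.axisCoord_eq hT hg ha hs.1 hs.2.1, hT.dist_smul_smul]
  rw [segCopies_iff hT hg hu hw huw,
    exists_isPacking_card_eq_iff (by exact_mod_cast hT.1.connected.pos_dist_of_ne hγ)]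
  constructor
  · rintro ⟨s, hcopy, hsep⟩
    refine ⟨fun i => axisCoord T g a (s i • γ.1), fun i => ⟨⟨s i, (hcopy i).1, rfl⟩, ?_, ?_⟩,
      fun i j hij => ?_⟩
    · exact (axisCoord_le_iff hT hg ha hu (hcopy i).1.1).2 (hcopy i).2.1
    · rw [← hend (hcopy i).1]
      exact (axisCoord_le_iff hT hg ha (hcopy i).1.2.1 hw).2 (hcopy i).2.2
    · rw [← hend (hcopy i).1]
      exact (axisCoord_le_iff hT hg ha (hcopy i).1.2.1 (hcopy j).1.1).2 (hsep i j hij)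
  · rintro ⟨m, hm, hsep⟩
    choose hcopy hum hmw using hm
    choose s hs hsm using hcopy
    obtain rfl : (fun i => axisCoord T g a (s i • γ.1)) = m := funext hsm
    simp only [← hend (hs _)] at hmw hsep
    refine ⟨s, fun i => ⟨hs i, ?_, ?_⟩, fun i j hij => ?_⟩
    · exact (axisCoord_le_iff hT hg ha hu (hs i).1).1 (hum i)
    · exact (axisCoord_le_iff hT hg ha (hs i).2.1 hw).1 (hmw i)
    · exact (axisCoord_le_iff hT hg ha (hs i).2.1 (hs j).1).1 (hsep i j hij)

theorem cSeg_eq_packNum (hT : IsTreeAction T G) (hg : ¬ Elliptic T g)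
    (hγ : γ.1 ≠ γ.2) (ha : a ∈ Axis T g) (hu : u ∈ Axis T g) (hw : w ∈ Axis T g)
    (huw : Ahead T g u w) : cSeg T G γ u w =
      packNum (copyCoords T g γ a) (T.dist γ.1 γ.2) (axisCoord T g a u) (axisCoord T g a w) := by
  simp only [cSeg, packNum, segCopies_iff_exists_isPacking hT hg hγ ha hu hw huw]

theorem CircCopies.le_packNum_add_one (hT : IsTreeAction T G) (hg : ¬ Elliptic T g)
    (hγ : γ.1 ≠ γ.2) (ha : a ∈ Axis T g) (h : CircCopies T g γ n) (v : ℤ) :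
    n ≤ packNum (copyCoords T g γ a) (T.dist γ.1 γ.2) v (v + transLen T g) + 1 := by
  rcases n.eq_zero_or_pos with rfl | hn
  · exact Nat.zero_le _
  obtain ⟨u, hu, hseg⟩ := h.exists_segCopies hT hg hn
  obtain ⟨F, hF, rfl⟩ := (segCopies_iff_exists_isPacking hT hg hγ ha hu
    (hT.smul_mem_axis_iff.2 hu) (ahead_smul hT hg hu)).1 hseg
  rw [axisCoord_smul hT hg ha hu] at hF
  refine hF.card_le_packNum.trans (packNum_period_le ?_ ?_ (periodic_copyCoords hT hg ha) _ _)
  · exact_mod_cast hT.1.connected.pos_dist_of_ne hγ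
  · exact_mod_cast hT.transLen_pos hg

theorem cCirc_le_packNum_add_one (hT : IsTreeAction T G) (hg : ¬ Elliptic T g)
    (hγ : γ.1 ≠ γ.2) (ha : a ∈ Axis T g) (v : ℤ) : cCirc T g γ ≤
      packNum (copyCoords T g γ a) (T.dist γ.1 γ.2) v (v + transLen T g) + 1 :=
  csSup_le' fun _ h => CircCopies.le_packNum_add_one hT hg hγ ha h v

theorem cSeg_smul_le_cCirc (hT : IsTreeAction T G) (hg : ¬ Elliptic T g) (hγ : γ.1 ≠ γ.2)
    (hu : u ∈ Axis T g) : cSeg T G γ u (g • u) ≤ cCirc T g γ :=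
  csSup_le' fun _ h =>
    le_csSup ⟨_, fun _ hn => CircCopies.le_packNum_add_one hT hg hγ hu hn 0⟩ (h.circCopies hT hg hu)

-- Copies of a degenerate `γ` can be repeated at will, and `sSup` of an unbounded set of naturals
-- is `0`.
theorem sSup_eq_zero_of_forall_mem {s : Set ℕ} (h : ∀ n ∈ s, 0 < n → ∀ m, m ∈ s) : sSup s = 0 := by
  by_cases hs : ∃ n ∈ s, 0 < n
  · obtain ⟨n, hn, hpos⟩ := hs
    have hunbounded : ¬ BddAbove s :=
      not_bddAbove_iff.2 fun m => ⟨m + 1, h n hn hpos _, m.lt_succ_self⟩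
    exact Nat.sSup_of_not_bddAbove hunbounded
  · exact Nat.le_zero.1 (csSup_le' fun n hn => not_lt.1 fun hpos => hs ⟨n, hn, hpos⟩)

theorem cSeg_eq_zero_of_eq (hγ : γ.1 = γ.2) (u w : V) : cSeg T G γ u w = 0 := by
  refine sSup_eq_zero_of_forall_mem fun n hn hpos m => ?_
  obtain ⟨p, q, hcopy, -⟩ := hn
  obtain ⟨⟨s, -, hq⟩, -, hqw⟩ := hcopy ⟨0, hpos⟩
  have hself : OnSeg T u (q ⟨0, hpos⟩) (q ⟨0, hpos⟩) := by simp [OnSeg]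
  exact ⟨fun _ => q ⟨0, hpos⟩, fun _ => q ⟨0, hpos⟩,
    fun _ => ⟨⟨s, by rw [hγ, hq], hq⟩, hself, hqw⟩, fun _ _ _ => hself⟩

theorem cCirc_eq_zero_of_eq (hγ : γ.1 = γ.2) : cCirc T g γ = 0 := by
  refine sSup_eq_zero_of_forall_mem fun n hn hpos m => ?_
  obtain ⟨s, hcopy, -, hperiod⟩ := circCopies_iff.1 hn
  let first : Fin n := ⟨0, hpos⟩
  have hself : Ahead T g (s first • γ.2) (s first • γ.1) := by
    rw [hγ]
    exact Ahead.refl (hcopy first).2.1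
  exact circCopies_iff.2 ⟨fun _ => s first, fun _ => hcopy first, fun _ _ _ => hself,
    fun _ _ => hperiod first first⟩

end Copies

/-- Counting lemma: if a fundamental domain for the hyperbolic element `g` is a
concatenation of non-overlapping coherently oriented segments `α₁, …, α_k` (given by
consecutive points `p 0, …, p k` along the axis with `p k = g • p 0`), then for any
oriented segment `γ`,  `Σᵢ c_γ(αᵢ) ≤ c_γ(g) ≤ k + Σᵢ c_γ(αᵢ)`. -/
theorem cCirc_juncture_bounds {V : Type*} (T : SimpleGraph V) {G : Type*} [Group G]
    [MulAction G V] (hT : IsTreeAction T G)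
    (g : G) (hg : ¬ Elliptic T g) (γ : V × V)
    (k : ℕ) (hk : 0 < k) (p : Fin (k + 1) → V)
    (hax : ∀ i, p i ∈ Axis T g)
    (hlast : p (Fin.last k) = g • p 0)
    (hord : ∀ i j : Fin (k + 1), i ≤ j → Ahead T g (p i) (p j)) :
    (∑ i : Fin k, cSeg T G γ (p i.castSucc) (p i.succ)) ≤ cCirc T g γ ∧
      cCirc T g γ ≤ k + ∑ i : Fin k, cSeg T G γ (p i.castSucc) (p i.succ) := by
  by_cases hγ : γ.1 = γ.2
  · simp [cSeg_eq_zero_of_eq hγ, cCirc_eq_zero_of_eq hγ]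
  let P i := axisCoord T g (p 0) (p i)
  let N := packNum (copyCoords T g γ (p 0)) (T.dist γ.1 γ.2)
  have hP : Monotone P := fun i j hij =>
    (axisCoord_le_iff hT hg (hax 0) (hax i) (hax j)).2 (hord i j hij)
  have hPlast : P (Fin.last k) = P 0 + transLen T g := by
    rw [← axisCoord_smul hT hg (hax 0) (hax 0), ← hlast]
  have hseg i j (hij : i ≤ j) : cSeg T G γ (p i) (p j) = N (P i) (P j) :=
    cSeg_eq_packNum hT hg hγ (hax 0) (hax i) (hax j) (hord i j hij)
  have hcirc_ge : N (P 0) (P (Fin.last k)) ≤ cCirc T g γ := by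
    rw [← hseg 0 _ (Fin.zero_le _), hlast]
    exact cSeg_smul_le_cCirc hT hg hγ (hax 0)
  have hcirc_le : cCirc T g γ ≤ N (P 0) (P (Fin.last k)) + 1 := by
    rw [hPlast]
    exact cCirc_le_packNum_add_one hT hg hγ (hax 0) (P 0)
  simp only [hseg _ _ (Fin.castSucc_le_succ _)]
  have hL : (0 : ℤ) < T.dist γ.1 γ.2 := by exact_mod_cast hT.1.connected.pos_dist_of_ne hγ
  exact ⟨(sum_packNum_le hL hP).trans hcirc_ge, hcirc_le.trans (packNum_add_one_le_add_sum hk P)⟩
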